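/- For every integer n > 1, every DWA over {a, b, i} that realizes O_n has at least n + 2 states; in particular, the states δ̂(q₀, i^j) for j = 0, 1, …, n + 1 are pairwise distinct. -/

import Mathlib

/-- A deterministic weighted automaton (DWA) over alphabet `A` with state space `Q`. -/
structure DWA (A : Type) (Q : Type) where
  init : Q
  δ : Q → A → Q
  c : Q → A → ℤ

/-- The extended transition function `δ̂`. -/
def DWA.run {A Q : Type} (M : DWA A Q) (q : Q) (w : List A) : Q :=
  w.foldl M.δ q

/-- The accumulated weight of the run on `w` starting in state `q`. -/
def DWA.valFrom {A Q : Type} (M : DWA A Q) : Q → List A → ℤ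
  | _, [] => 0
  | q, x :: w => M.c q x + M.valFrom (M.δ q x) w

/-- The value `A(w)` of a word: the sum of the weights along the run from the initial state. -/
def DWA.val {A Q : Type} (M : DWA A Q) (w : List A) : ℤ :=
  M.valFrom M.init w

/-- The three-letter alphabet `{a, b, i}`. -/
inductive ABI where
  | a : ABI
  | b : ABI
  | i : ABI
deriving DecidableEq

open Classical in
/-- The observation function `O_n` on nonempty words over `{a, b, i}`:
`O_n(w) = 1` if `w` consists only of `i`'s, or `i^{n+1}` is a prefix of `w`, or
`i^k·a·b^{n-k}` or `i^k·b·a^{n-k}` is a prefix of `w` for some `k < n`; otherwise `O_n(w) = 2`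
if the first letter of `w` different from `i` is `a`, and `O_n(w) = 0` if it is `b`. -/
noncomputable def Obs (n : ℕ) (w : List ABI) : ℕ :=
  if (∀ x ∈ w, x = ABI.i) ∨
      (List.replicate (n + 1) ABI.i <+: w) ∨
      (∃ k < n, List.replicate k ABI.i ++ [ABI.a] ++ List.replicate (n - k) ABI.b <+: w) ∨
      (∃ k < n, List.replicate k ABI.i ++ [ABI.b] ++ List.replicate (n - k) ABI.a <+: w)
  then 1
  else if ∃ k, List.replicate k ABI.i ++ [ABI.a] <+: w then 2
  else 0

/-- A DWA `M` over `{a, b, i}` realizes `O_n` if, for every nonempty word `w`,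
`M(w) < 0 ↔ O_n(w) = 0`, `M(w) = 0 ↔ O_n(w) = 1`, and `M(w) > 0 ↔ O_n(w) = 2`. -/
def Realizes {Q : Type} (n : ℕ) (M : DWA ABI Q) : Prop :=
  ∀ w : List ABI, w ≠ [] →
    (M.val w < 0 ↔ Obs n w = 0) ∧ (M.val w = 0 ↔ Obs n w = 1) ∧ (0 < M.val w ↔ Obs n w = 2)

/-!
A word of `i`s has value zero, so if `i^j` and `i^k` lead to the same state then `i^j w` and
`i^k w` have equal values for every `w`; in particular `O_n` takes the value `1` on both or on
neither. Now `O_n (i^j a b^m) = 1` holds exactly when `n < j`, or `j < n` and `n ≤ j + m`. For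
`j < k ≤ n + 1` the suffix `a b^(n - k)`, with `n - k` truncated to `0` when `k = n + 1`, therefore
separates `i^j` from `i^k`, unless `k = n`, when `a b^(n - j)` does.
-/

section Replicate

variable {α : Type*} {x y z : α}

theorem replicate_prefix_replicate_append_cons_iff (hz : z ≠ x) (r k : ℕ) (v : List α) :
    List.replicate r x <+: List.replicate k x ++ z :: v ↔ r ≤ k := by
  induction r generalizing k with
  | zero => simp
  | succ r ih => cases k <;> simp [List.replicate_succ, List.cons_prefix_cons, hz.symm, ih]

theorem replicate_append_cons_prefix_replicate_append_cons_iff (hy : y ≠ x) (hz : z ≠ x)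
    (r k : ℕ) (u v : List α) :
    List.replicate r x ++ y :: u <+: List.replicate k x ++ z :: v ↔ r = k ∧ y = z ∧ u <+: v := by
  induction r generalizing k with
  | zero => cases k <;> simp [List.replicate_succ, List.cons_prefix_cons, hy]
  | succ r ih => cases k <;> simp [List.replicate_succ, List.cons_prefix_cons, hz.symm, ih]

end Replicate

namespace DWA

variable {A Q : Type} (M : DWA A Q)

theorem valFrom_append (q : Q) (u v : List A) :
    M.valFrom q (u ++ v) = M.valFrom q u + M.valFrom (M.run q u) v := by
  induction u generalizing q with
  | nil => simp [valFrom, run]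
  | cons x u ih => simp [valFrom, run, ih, add_assoc]

theorem val_append_congr {u v : List A} (hval : M.val u = M.val v)
    (hrun : M.run M.init u = M.run M.init v) (w : List A) : M.val (u ++ w) = M.val (v ++ w) :=
  calc
    M.val (u ++ w) = M.val u + M.valFrom (M.run M.init u) w := M.valFrom_append _ u w
    _ = M.val v + M.valFrom (M.run M.init v) w := by rw [hval, hrun]
    _ = M.val (v ++ w) := (M.valFrom_append _ v w).symm

end DWA

section Obs

variable {n : ℕ}

theorem obs_eq_one_iff {w : List ABI} :
    Obs n w = 1 ↔
      (∀ x ∈ w, x = ABI.i) ∨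
      (List.replicate (n + 1) ABI.i <+: w) ∨
      (∃ k < n, List.replicate k ABI.i ++ [ABI.a] ++ List.replicate (n - k) ABI.b <+: w) ∨
      (∃ k < n, List.replicate k ABI.i ++ [ABI.b] ++ List.replicate (n - k) ABI.a <+: w) := by
  unfold Obs
  split_ifs with h
  exacts [iff_of_true rfl h, iff_of_false (by decide) h, iff_of_false (by decide) h]

theorem obs_replicate_i (j : ℕ) : Obs n (List.replicate j ABI.i) = 1 :=
  obs_eq_one_iff.2 <| Or.inl fun _ => List.eq_of_mem_replicate

theorem obs_replicate_i_append_a_cons_eq_one_iff {j : ℕ} {v : List ABI} :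
    Obs n (List.replicate j ABI.i ++ ABI.a :: v) = 1 ↔
      n < j ∨ j < n ∧ List.replicate (n - j) ABI.b <+: v := by
  have not_all_i : ¬ ∀ x ∈ List.replicate j ABI.i ++ ABI.a :: v, x = ABI.i :=
    fun h => absurd (h ABI.a (by simp)) (by simp)
  rw [obs_eq_one_iff, or_iff_right not_all_i]
  simp [replicate_prefix_replicate_append_cons_iff,
    replicate_append_cons_prefix_replicate_append_cons_iff]

theorem obs_replicate_i_append_a_cons_replicate_b_eq_one_iff {j m : ℕ} :
    Obs n (List.replicate j ABI.i ++ ABI.a :: List.replicate m ABI.b) = 1 ↔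
      n < j ∨ j < n ∧ n ≤ j + m := by
  simp [obs_replicate_i_append_a_cons_eq_one_iff, List.prefix_replicate_iff, add_comm]

theorem exists_obs_eq_one_not_iff {j k : ℕ} (hjk : j < k) (hk : k ≤ n + 1) :
    ∃ v, ¬ (Obs n (List.replicate j ABI.i ++ ABI.a :: v) = 1 ↔
      Obs n (List.replicate k ABI.i ++ ABI.a :: v) = 1) := by
  by_cases hkn : k = n
  · use List.replicate (n - j) ABI.b
    simp only [obs_replicate_i_append_a_cons_replicate_b_eq_one_iff]
    omega
  · use List.replicate (n - k) ABI.b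
    simp only [obs_replicate_i_append_a_cons_replicate_b_eq_one_iff]
    omega

end Obs

section ZeroSet

variable {n : ℕ} {Q : Type} {M : DWA ABI Q}

theorem val_replicate_i_eq_zero (hM : ∀ w, w ≠ [] → (M.val w = 0 ↔ Obs n w = 1)) (j : ℕ) :
    M.val (List.replicate j ABI.i) = 0 := by
  obtain rfl | hj := eq_or_ne j 0
  · rfl
  · exact (hM _ (by simpa using hj)).2 (obs_replicate_i j)

theorem run_replicate_i_ne_of_lt (hM : ∀ w, w ≠ [] → (M.val w = 0 ↔ Obs n w = 1)) {j k : ℕ}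
    (hjk : j < k) (hk : k ≤ n + 1) :
    M.run M.init (List.replicate j ABI.i) ≠ M.run M.init (List.replicate k ABI.i) := by
  intro hrun
  obtain ⟨v, hv⟩ := exists_obs_eq_one_not_iff hjk hk
  have hval : M.val (List.replicate j ABI.i) = M.val (List.replicate k ABI.i) := by
    simp only [val_replicate_i_eq_zero hM]
  apply hv
  rw [← hM _ (by simp), ← hM _ (by simp), M.val_append_congr hval hrun]

theorem injOn_run_replicate_i (hM : ∀ w, w ≠ [] → (M.val w = 0 ↔ Obs n w = 1)) :
    Set.InjOn (fun j => M.run M.init (List.replicate j ABI.i)) (Set.Iic (n + 1)) := by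
  intro j hj k hk hrun
  by_contra hjk
  rcases Nat.lt_or_gt_of_ne hjk with h | h
  · exact run_replicate_i_ne_of_lt hM h hk hrun
  · exact run_replicate_i_ne_of_lt hM h hj hrun.symm

end ZeroSet

theorem min_states_realizing_general (n : ℕ) (Q : Type) (M : DWA ABI Q)
    (hM : ∀ w, w ≠ [] → (M.val w = 0 ↔ Obs n w = 1)) :
    (n + 2 : ℕ) ≤ ENat.card Q ∧
    ∀ j k, j ≤ n + 1 → k ≤ n + 1 → j ≠ k →
      M.run M.init (List.replicate j ABI.i) ≠ M.run M.init (List.replicate k ABI.i) := by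
  have hinj := injOn_run_replicate_i hM
  refine ⟨?_, fun j k hj hk => hinj.ne hj hk⟩
  simpa [add_assoc, one_add_one_eq_two] using ENat.card_le_card_of_injective hinj.injective

/-- every DWA over `{a, b, i}` realizing `O_n` has at least `n + 2` states;
in particular the states `δ̂(q₀, i^j)` for `j = 0, …, n + 1` are pairwise distinct. -/
theorem min_states_realizing (n : ℕ) (hn : 1 < n) (Q : Type) [Fintype Q]
    (M : DWA ABI Q) (hM : Realizes n M) :
    n + 2 ≤ Fintype.card Q ∧
    ∀ j k, j ≤ n + 1 → k ≤ n + 1 → j ≠ k →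
      M.run M.init (List.replicate j ABI.i) ≠ M.run M.init (List.replicate k ABI.i) := by
  have h := min_states_realizing_general n Q M fun w hw => (hM w hw).2.1
  rwa [ENat.card_eq_coe_fintype_card, Nat.cast_le] at h
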